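/- Marginalization preserves the E-separation model: let G = (V, E_d) be a directed graph, V = V_obs ⊔ V_lat a partition of its nodes, A, B, C ⊆ V_obs with A ∩ C = ∅, and let G′ = (V_obs, E_d′, E_bi′) be the latent projection of G on V_obs. Then (A, B, C) ∈ I_E^G if and only if (A, B, C) ∈ I_E^{G′}. -/

import Mathlib

namespace ESepPaper

/-- A directed mixed graph: directed edges and bidirected edges over a node type `V`.
A directed graph (DG) is a DMG with `Ebi = ∅`. -/
structure DMG (V : Type) where
  Ed : Set (V × V)
  Ebi : Set (Sym2 V)

variable {V : Type}

/-- `G.ancestor u v` : there is a directed path `u → … → v` (possibly trivial). -/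
def DMG.ancestor (G : DMG V) : V → V → Prop :=
  Relation.ReflTransGen (fun u v => (u, v) ∈ G.Ed)

/-- Ancestors of a set `C`. -/
def DMG.anc (G : DMG V) (C : Set V) : Set V := {u | ∃ v ∈ C, G.ancestor u v}

/-- Strongly connected component of `v`. -/
def DMG.scc (G : DMG V) (v : V) : Set V := {w | G.ancestor w v ∧ G.ancestor v w}

/-- Parents of a set of nodes. -/
def DMG.pa (G : DMG V) (S : Set V) : Set V := {w | ∃ v ∈ S, (w, v) ∈ G.Ed}

/-- Kind of a traversed edge on a walk: forward directed, backward directed, or bidirected. -/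
inductive LinkType | fwd | bwd | bi
deriving DecidableEq

/-- Validity of a link of kind `t` between consecutive walk nodes `u` and `v`. -/
def DMG.linkOK (G : DMG V) (u v : V) : LinkType → Prop
  | .fwd => (u, v) ∈ G.Ed
  | .bwd => (v, u) ∈ G.Ed
  | .bi => s(u, v) ∈ G.Ebi

/-- Arrowhead at the second (right) endpoint of the link. -/
def LinkType.headR : LinkType → Prop
  | .fwd => True
  | .bwd => False
  | .bi => True

/-- Arrowhead at the first (left) endpoint of the link. -/
def LinkType.headL : LinkType → Prop
  | .fwd => False
  | .bwd => True
  | .bi => True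

/-- Tail at the second (right) endpoint. -/
def LinkType.tailR (t : LinkType) : Prop := t = .bwd

/-- Tail at the first (left) endpoint. -/
def LinkType.tailL (t : LinkType) : Prop := t = .fwd

/-- Walks in a DMG. -/
inductive DMG.Walk (G : DMG V) : V → V → Type
  | nil (v : V) : DMG.Walk G v v
  | cons {u v w : V} (t : LinkType) (h : G.linkOK u v t) (p : DMG.Walk G v w) : DMG.Walk G u w

/-- An interior node on a walk, whose incoming link is `t1` and outgoing link is `t2`,
is a collider iff both links have an arrowhead at it. -/
def colliderAt (t1 t2 : LinkType) : Prop := t1.headR ∧ t2.headL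

/-- An interior non-collider `v` between neighbours `u` (incoming link `t1`) and `w`
(outgoing link `t2`) is unblockable: on every side where the link has a tail at `v`, the
corresponding neighbour lies in `scc_G(v)` (left-chain/right-chain/fork cases). -/
def unblockableAt (G : DMG V) (u v w : V) (t1 t2 : LinkType) : Prop :=
  (t1.tailR → u ∈ G.scc v) ∧ (t2.tailL → w ∈ G.scc v)

namespace DMG.Walk

variable {G : DMG V}

/-- First node of a walk. -/
def first {a b : V} (_ : G.Walk a b) : V := a

def length : {a b : V} → G.Walk a b → ℕ
  | _, _, .nil _ => 0
  | _, _, .cons _ _ p => p.length + 1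

def support : {a b : V} → G.Walk a b → List V
  | a, _, .nil _ => [a]
  | a, _, .cons _ _ p => a :: p.support

/-- Auxiliary: σ-openness of the remainder of a walk, where `u` is the previous node and
`t1` the link from `u` into the current first node. -/
def sigmaOpenAux (C : Set V) : (u : V) → LinkType → {b c : V} → G.Walk b c → Prop
  | _, _, _, _, .nil _ => True
  | u, t1, v, _, .cons t2 _ q =>
      ((colliderAt t1 t2 → v ∈ G.anc C) ∧
       (¬ colliderAt t1 t2 → ¬ unblockableAt G u v q.first t1 t2 → v ∉ C)) ∧
      sigmaOpenAux C v t2 q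

/-- The walk is σ-open given `C`: every collider on it is an ancestor of a node of `C`, and
no blockable non-collider on it lies in `C`. -/
def sigmaOpen (C : Set V) : {a b : V} → G.Walk a b → Prop
  | _, _, .nil _ => True
  | a, _, .cons t _ q => sigmaOpenAux C a t q

/-- All links are forward directed. -/
def IsDirected : {a b : V} → G.Walk a b → Prop
  | _, _, .nil _ => True
  | _, _, .cons t _ p => t = .fwd ∧ p.IsDirected

/-- Interior nodes of the walk (all nodes except the two endpoints). -/
def interior {a b : V} (p : G.Walk a b) : List V := p.support.tail.dropLast

/-- Arrowhead at the first endpoint. -/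
def headAtStart : {a b : V} → G.Walk a b → Prop
  | _, _, .nil _ => False
  | _, _, .cons t _ _ => t.headL

def headAtEndAux : LinkType → {a b : V} → G.Walk a b → Prop
  | t, _, _, .nil _ => t.headR
  | _, _, _, .cons t _ q => headAtEndAux t q

/-- Arrowhead at the last endpoint. -/
def headAtEnd : {a b : V} → G.Walk a b → Prop
  | _, _, .nil _ => False
  | _, _, .cons t _ q => headAtEndAux t q

def noCollidersAux : LinkType → {a b : V} → G.Walk a b → Prop
  | _, _, _, .nil _ => True
  | t1, _, _, .cons t2 _ q => ¬ colliderAt t1 t2 ∧ noCollidersAux t2 q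

/-- There is no collider on the walk. -/
def NoColliders : {a b : V} → G.Walk a b → Prop
  | _, _, .nil _ => True
  | _, _, .cons t _ q => noCollidersAux t q

def collidersInAux (S : Set V) : LinkType → {a b : V} → G.Walk a b → Prop
  | _, _, _, .nil _ => True
  | t1, v, _, .cons t2 _ q => (colliderAt t1 t2 → v ∈ S) ∧ collidersInAux S t2 q

/-- Every collider on the walk lies in `S`. -/
def CollidersIn (S : Set V) : {a b : V} → G.Walk a b → Prop
  | _, _, .nil _ => True
  | _, _, .cons t _ q => collidersInAux S t q

def noncollUnblAux : (u : V) → LinkType → {b c : V} → G.Walk b c → Prop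
  | _, _, _, _, .nil _ => True
  | u, t1, v, _, .cons t2 _ q =>
      (¬ colliderAt t1 t2 → unblockableAt G u v q.first t1 t2) ∧ noncollUnblAux v t2 q

/-- Every interior non-collider on the walk is unblockable. -/
def NoncollidersUnblockable : {a b : V} → G.Walk a b → Prop
  | _, _, .nil _ => True
  | a, _, .cons t _ q => noncollUnblAux a t q

/-- The set of edges occurring on a walk (directed edges as ordered pairs in `E_d`,
bidirected edges as unordered pairs). -/
def edges : {a b : V} → G.Walk a b → Set ((V × V) ⊕ Sym2 V)
  | _, _, .nil _ => ∅
  | a, _, .cons t _ p =>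
      insert (match t with
        | .fwd => Sum.inl (a, p.first)
        | .bwd => Sum.inl (p.first, a)
        | .bi => Sum.inr s(a, p.first)) p.edges

/-- Concatenation of walks. -/
def append : {a b c : V} → G.Walk a b → G.Walk b c → G.Walk a c
  | _, _, _, .nil _, q => q
  | _, _, _, .cons t h p, q => .cons t h (p.append q)

/-- A walk `v_0, …, v_{n+1}` is a path if no node besides the final endpoint occurs more
than once, i.e. `v_0, …, v_n` are pairwise distinct. -/
def IsPath {a b : V} (p : G.Walk a b) : Prop := p.support.dropLast.Nodup

end DMG.Walk

/-- `A` is σ-separated from `B` given `C` in `G`: every walk from a node of `A` to a node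
of `B` is σ-blocked given `C`. -/
def DMG.sigmaSep (G : DMG V) (A B C : Set V) : Prop :=
  ∀ a ∈ A, ∀ b ∈ B, ∀ p : G.Walk a b, ¬ p.sigmaOpen C

/-- The lifted dependency graph of `G`, on two copies of `V`
(`Sum.inl` is the past copy `V_0`, `Sum.inr` the future copy `V_1`). -/
def DMG.lift (G : DMG V) : DMG (V ⊕ V) where
  Ed := {e | ∃ u v, (u, v) ∈ G.Ed ∧
        (e = (Sum.inl u, Sum.inl v) ∨ e = (Sum.inl u, Sum.inr v) ∨
         e = (Sum.inr u, Sum.inr v))}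
  Ebi := {e | ∃ u v, s(u, v) ∈ G.Ebi ∧
        (e = s(Sum.inl u, Sum.inl v) ∨ e = s(Sum.inl u, Sum.inr v) ∨
         e = s(Sum.inr u, Sum.inl v) ∨ e = s(Sum.inr u, Sum.inr v))}

/-- `B` is E-separated from `A` given `C` in `G`:
`A_0` is σ-separated from `B_1` given `C_0 ∪ (C_1 \ B_1)` in the lifted dependency graph. -/
def DMG.ESep (G : DMG V) (A B C : Set V) : Prop :=
  G.lift.sigmaSep (Sum.inl '' A) (Sum.inr '' B)
    ((Sum.inl '' C) ∪ ((Sum.inr '' C) \ (Sum.inr '' B)))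

/-- The independence model `I_E^G` of E-separation triples. -/
def DMG.IE (G : DMG V) : Set (Set V × Set V × Set V) :=
  {t | G.ESep t.1 t.2.1 t.2.2}


/-- The latent projection of `G` onto the observed nodes `O`: a directed edge when there is
a non-trivial directed walk whose interior nodes are all latent, and a bidirected edge when
there is a non-trivial collider-free walk with arrowheads at both endpoints whose interior
nodes are all latent. -/
def DMG.latentProj (G : DMG V) (O : Set V) : DMG O where
  Ed := {e | ∃ p : G.Walk e.1.val e.2.val,
          p.IsDirected ∧ 0 < p.length ∧ ∀ x ∈ p.interior, x ∉ O}
  Ebi := {e | ∃ u v : O, e = s(u, v) ∧ ∃ p : G.Walk u.val v.val,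
          p.headAtStart ∧ p.headAtEnd ∧ p.NoColliders ∧ 0 < p.length ∧
          ∀ x ∈ p.interior, x ∉ O}

/-- The last edge of the walk `p` before entering `scc_G(w)` has an arrowhead at its
endpoint in `scc_G(w)` (vacuous if the walk never leaves `scc_G(w)`). -/
def DMG.lastEdgeInto (G : DMG V) {a b : V} (w : V) (p : G.Walk a b) : Prop :=
  (∀ x ∈ p.support, x ∈ G.scc w) ∨
  ∃ (x y : V) (t : LinkType) (h : G.linkOK x y t) (p₁ : G.Walk a x) (p₂ : G.Walk y b),
    p = p₁.append (.cons t h p₂) ∧ x ∉ G.scc w ∧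
    (∀ z ∈ p₂.support, z ∈ G.scc w) ∧ t.headR

/-- An (asymmetric) inducing path from `v` to `w`: a non-trivial path such that every
collider on it is an ancestor of `v` or `w`, every interior non-collider is unblockable,
and the last edge before entering `scc_G(w)` points into `scc_G(w)`. -/
def DMG.IsInducingPath (G : DMG V) {v w : V} (p : G.Walk v w) : Prop :=
  0 < p.length ∧ p.IsPath ∧
  p.CollidersIn (G.anc {v, w}) ∧ p.NoncollidersUnblockable ∧ G.lastEdgeInto w p

inductive Mk
  | head : Mk
  | tl (p : Prop) : Mk

def Mk.isHead : Mk → Prop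
  | .head => True
  | .tl _ => False

def Mk.good : Mk → Prop
  | .head => True
  | .tl p => p

def OKm (inC inA : Prop) (m1 m2 : Mk) : Prop :=
  ((m1.isHead ∧ m2.isHead) → inA) ∧ (¬ (m1.isHead ∧ m2.isHead) → inC → m1.good ∧ m2.good)

def mL (H : DMG V) (v w : V) : LinkType → Mk
  | .fwd => .tl (w ∈ H.scc v)
  | _ => .head

def mR (H : DMG V) (u v : V) : LinkType → Mk
  | .bwd => .tl (u ∈ H.scc v)
  | _ => .head

inductive Reach (H : DMG V) (C : Set V) (a : V) : V → Mk → Prop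
  | init : Reach H C a a (.tl False)
  | step {v w : V} {m : Mk} (t : LinkType) : Reach H C a v m → H.linkOK v w t →
      OKm (v ∈ C) (v ∈ H.anc C) m (mL H v w t) → Reach H C a w (mR H v w t)

def auxM {H : DMG V} (C : Set V) : Mk → {a b : V} → H.Walk a b → Prop
  | _, _, _, .nil _ => True
  | m, v, _, .cons (v := w) t _ q =>
      OKm (v ∈ C) (v ∈ H.anc C) m (mL H v w t) ∧ auxM C (mR H v w t) q

lemma OKm_iff (H : DMG V) (C : Set V) (u v w : V) (t1 t2 : LinkType) :
    OKm (v ∈ C) (v ∈ H.anc C) (mR H u v t1) (mL H v w t2) ↔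
    ((colliderAt t1 t2 → v ∈ H.anc C) ∧
       (¬ colliderAt t1 t2 → ¬ unblockableAt H u v w t1 t2 → v ∉ C)) := by
  cases t1 <;> cases t2 <;>
  simp [OKm, mR, mL, Mk.isHead, Mk.good, colliderAt, unblockableAt, LinkType.headR,
    LinkType.headL, LinkType.tailR, LinkType.tailL] <;> tauto

lemma aux_iff {H : DMG V} (C : Set V) {b c : V} (p : H.Walk b c) : ∀ (u : V) (t1 : LinkType),
    p.sigmaOpenAux C u t1 ↔ auxM C (mR H u b t1) p := by
  induction p with
  | nil v => intro u t; simp [auxM, DMG.Walk.sigmaOpenAux]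
  | cons t h q ih =>
    intro u t1
    simp only [auxM, DMG.Walk.sigmaOpenAux]
    rw [OKm_iff, ih]
    rfl

lemma open_iff {H : DMG V} (C : Set V) {a b : V} (ha : a ∉ C) (p : H.Walk a b) :
    p.sigmaOpen C ↔ auxM C (.tl False) p := by
  cases p with
  | nil v => simp [auxM, DMG.Walk.sigmaOpen]
  | cons t h q =>
    simp only [auxM, DMG.Walk.sigmaOpen]
    rw [aux_iff]
    simp [OKm, Mk.isHead, ha]

lemma reach_of_walk {H : DMG V} (C : Set V) {a v b : V} (p : H.Walk v b) : ∀ m,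
    Reach H C a v m → auxM C m p → ∃ m', Reach H C a b m' := by
  induction p with
  | nil v => intro m h _; exact ⟨m, h⟩
  | cons t h q ih =>
    intro m hr hp
    exact ih _ (.step t hr h hp.1) hp.2

lemma walk_of_reach {H : DMG V} (C : Set V) {a v b : V} {m : Mk} (h : Reach H C a v m) :
    (∃ p : H.Walk v b, auxM C m p) → ∃ p : H.Walk a b, auxM C (.tl False) p := by
  induction h with
  | init => exact id
  | step t _ hl hok ih =>
    rintro ⟨p, hp⟩
    exact ih ⟨.cons t hl p, hok, hp⟩

lemma sep_iff (H : DMG V) (A B C : Set V) (hA : ∀ a ∈ A, a ∉ C) :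
    H.sigmaSep A B C ↔ ∀ a ∈ A, ∀ b ∈ B, ∀ m, ¬ Reach H C a b m := by
  constructor
  · intro h a ha b hb m hr
    obtain ⟨p, hp⟩ := walk_of_reach C (b := b) hr ⟨.nil b, trivial⟩
    exact h a ha b hb p ((open_iff C (hA a ha) p).2 hp)
  · intro h a ha b hb p hp
    obtain ⟨m, hm⟩ := reach_of_walk C p _ (Reach.init (a := a)) ((open_iff C (hA a ha) p).1 hp)
    exact h a ha b hb m hm

/-- Nontrivial directed path with interior in `L`. -/
inductive DP (H : DMG V) (L : Set V) : V → V → Prop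
  | single {x y : V} : (x, y) ∈ H.Ed → DP H L x y
  | cons {x z y : V} : (x, z) ∈ H.Ed → z ∈ L → DP H L z y → DP H L x y

lemma DP.trans {H : DMG V} {L : Set V} {x y z : V} (h : DP H L x y) (hy : y ∈ L)
    (h2 : DP H L y z) : DP H L x z := by
  induction h with
  | single h => exact .cons h hy h2
  | cons h hz _ ih => exact .cons h hz (ih hy h2)

lemma DP.anc {H : DMG V} {L : Set V} {x y : V} (h : DP H L x y) : H.ancestor x y := by
  induction h with
  | single h => exact Relation.ReflTransGen.single h
  | cons h hz _ ih => exact Relation.ReflTransGen.head h ih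

structure Proj {W W' : Type} (H : DMG W) (H' : DMG W') (ι : W' → W) (C : Set W) (C' : Set W') :
    Prop where
  hbi : H.Ebi = ∅
  inj : Function.Injective ι
  hD : ∀ u v, (u, v) ∈ H'.Ed ↔ DP H (Set.range ι)ᶜ (ι u) (ι v)
  hB : ∀ u v, s(u, v) ∈ H'.Ebi ↔ ∃ l ∈ (Set.range ι)ᶜ, DP H (Set.range ι)ᶜ l (ι u) ∧
    DP H (Set.range ι)ᶜ l (ι v)
  hC : ∀ v, v ∈ C' ↔ ι v ∈ C
  hCr : C ⊆ Set.range ι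

section
variable {W W' : Type} {H : DMG W} {H' : DMG W'} {ι : W' → W} {C : Set W} {C' : Set W'}

lemma Proj.anc_aux (P : Proj H H' ι C C') {x y : W} (h : H.ancestor x y) : ∀ v, y = ι v →
    (x ∈ (Set.range ι)ᶜ → ∃ o, DP H (Set.range ι)ᶜ x (ι o) ∧ H'.ancestor o v) ∧
    (∀ u, x = ι u → H'.ancestor u v) := by
  intro v hv
  subst hv
  induction h using Relation.ReflTransGen.head_induction_on with
  | refl =>
    refine ⟨fun h => absurd ⟨v, rfl⟩ h, fun u hu => ?_⟩
    rw [P.inj hu]; exact Relation.ReflTransGen.refl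
  | @head x z hxz _ ih =>
    have key : ∃ o, DP H (Set.range ι)ᶜ x (ι o) ∧ H'.ancestor o v := by
      by_cases hz : z ∈ Set.range ι
      · obtain ⟨z', rfl⟩ := hz
        exact ⟨z', .single hxz, ih.2 z' rfl⟩
      · obtain ⟨o, ho, ho2⟩ := ih.1 hz
        exact ⟨o, .cons hxz hz ho, ho2⟩
    refine ⟨fun _ => key, ?_⟩
    rintro u rfl
    obtain ⟨o, ho, ho2⟩ := key
    exact Relation.ReflTransGen.head ((P.hD _ _).2 ho) ho2

lemma Proj.anc_iff (P : Proj H H' ι C C') (u v : W') :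
    H'.ancestor u v ↔ H.ancestor (ι u) (ι v) := by
  constructor
  · intro h
    induction h with
    | refl => exact Relation.ReflTransGen.refl
    | tail _ h ih => exact Relation.ReflTransGen.trans ih ((P.hD _ _).1 h).anc
  · intro h; exact (P.anc_aux h v rfl).2 u rfl

lemma Proj.scc_iff (P : Proj H H' ι C C') (u v : W') :
    u ∈ H'.scc v ↔ ι u ∈ H.scc (ι v) := by
  simp [DMG.scc, P.anc_iff]

lemma Proj.ancC_iff (P : Proj H H' ι C C') (u : W') :
    u ∈ H'.anc C' ↔ ι u ∈ H.anc C := by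
  constructor
  · rintro ⟨v, hv, h⟩
    exact ⟨ι v, (P.hC v).1 hv, (P.anc_iff _ _).1 h⟩
  · rintro ⟨c, hc, h⟩
    obtain ⟨v, rfl⟩ := P.hCr hc
    exact ⟨v, (P.hC v).2 hc, (P.anc_iff _ _).2 h⟩

lemma Proj.notC (P : Proj H H' ι C C') {x : W} (hx : x ∈ (Set.range ι)ᶜ) : x ∉ C :=
  fun h => hx (P.hCr h)

/-! From the projection to the full graph. -/

lemma Proj.fwd (P : Proj H H' ι C C') {a x y : W} (h : DP H (Set.range ι)ᶜ x y) : ∀ m,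
    Reach H C a x m → OKm (x ∈ C) (x ∈ H.anc C) m (.tl (y ∈ H.scc x)) → Reach H C a y .head := by
  induction h with
  | single h => intro m hr hok; exact Reach.step .fwd hr h hok
  | @cons x z y h hz hd ih =>
    intro m hr hok
    refine ih .head (Reach.step .fwd hr h ⟨?_, ?_⟩) ?_
    · simp [mL, Mk.isHead]
    · intro _ hc
      have := hok.2 (by simp [Mk.isHead]) hc
      refine ⟨this.1, ?_⟩
      have h2 : y ∈ H.scc x := this.2
      exact ⟨hd.anc.trans h2.1, Relation.ReflTransGen.single h⟩
    · have := P.notC hz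
      simp [OKm, Mk.isHead, this]

lemma Proj.bwd (P : Proj H H' ι C C') {a x y : W} (h : DP H (Set.range ι)ᶜ y x) : ∀ m,
    Reach H C a x m → OKm (x ∈ C) (x ∈ H.anc C) m .head →
    ∃ p : Prop, (x ∈ H.scc y → p) ∧ Reach H C a y (.tl p) := by
  induction h with
  | single h => intro m hr hok; exact ⟨_, id, Reach.step .bwd hr h hok⟩
  | @cons y z x h hz hd ih =>
    intro m hr hok
    obtain ⟨p, hp, hr2⟩ := ih m hr hok
    refine ⟨z ∈ H.scc y, ?_, Reach.step .bwd hr2 h ?_⟩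
    · intro hx
      exact ⟨hd.anc.trans hx.1, Relation.ReflTransGen.single h⟩
    · have := P.notC hz
      simp [OKm, Mk.isHead, this, mL]

lemma Proj.reach_up (P : Proj H H' ι C C') {a v : W'} {m : Mk} (h : Reach H' C' a v m) :
    ∃ m', Reach H C (ι a) (ι v) m' ∧ ∀ m2, OKm (v ∈ C') (v ∈ H'.anc C') m m2 →
      OKm (ι v ∈ C) (ι v ∈ H.anc C) m' m2 := by
  induction h with
  | init => exact ⟨_, .init, fun m2 h => by rw [P.hC, P.ancC_iff] at h; exact h⟩
  | @step v w m t _ hl hok ih =>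
    obtain ⟨m', hr, hm⟩ := ih
    have hok' := hm _ hok
    cases t with
    | fwd =>
      refine ⟨.head, P.fwd ((P.hD _ _).1 hl) m' hr ?_, ?_⟩
      · rw [← P.scc_iff]; exact hok'
      · intro m2 h; rw [P.hC, P.ancC_iff] at h; exact h
    | bwd =>
      obtain ⟨p, hp, hr2⟩ := P.bwd ((P.hD _ _).1 hl) m' hr hok'
      refine ⟨_, hr2, ?_⟩
      intro m2 h
      rw [P.hC, P.ancC_iff] at h
      rw [← P.scc_iff] at hp
      simp only [OKm, mR, Mk.isHead, Mk.good] at h ⊢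
      tauto
    | bi =>
      obtain ⟨l, hlL, h1, h2⟩ := (P.hB _ _).1 hl
      obtain ⟨p, hp, hr2⟩ := P.bwd h1 m' hr hok'
      refine ⟨.head, P.fwd h2 _ hr2 ?_, ?_⟩
      · simp [OKm, Mk.isHead, P.notC hlL]
      · intro m2 h; rw [P.hC, P.ancC_iff] at h; exact h

/-! From the full graph to the projection. -/

def PT (H : DMG W) (H' : DMG W') (ι : W' → W) (C' : Set W') (a : W') (x : W) : Prop :=
  ∃ o m, Reach H' C' a o m ∧ OKm (o ∈ C') (o ∈ H'.anc C') m .head ∧ DP H (Set.range ι)ᶜ x (ι o)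

def PH (H : DMG W) (H' : DMG W') (ι : W' → W) (C' : Set W') (a : W') (x : W) : Prop :=
  (∃ v m, Reach H' C' a v m ∧ v ∉ C' ∧ DP H (Set.range ι)ᶜ (ι v) x) ∨
  ∃ l, l ∈ (Set.range ι)ᶜ ∧ PT H H' ι C' a l ∧ (l = x ∨ DP H (Set.range ι)ᶜ l x)

lemma PH.ext {a : W'} {x y : W} (h : PH H H' ι C' a x) (hx : x ∈ (Set.range ι)ᶜ)
    (hd : DP H (Set.range ι)ᶜ x y) : PH H H' ι C' a y := by
  rcases h with ⟨v, m, h1, h2, h3⟩ | ⟨l, hl, h1, rfl | h2⟩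
  · exact .inl ⟨v, m, h1, h2, h3.trans hx hd⟩
  · exact .inr ⟨l, hl, h1, .inr hd⟩
  · exact .inr ⟨l, hl, h1, .inr (h2.trans hx hd)⟩

lemma PT.ph {a : W'} {x : W} (h : PT H H' ι C' a x) (hx : x ∈ (Set.range ι)ᶜ) :
    PH H H' ι C' a x := .inr ⟨x, hx, h, .inl rfl⟩

lemma Proj.arrive (P : Proj H H' ι C C') {a o : W'} (h : PH H H' ι C' a (ι o)) :
    Reach H' C' a o .head := by
  rcases h with ⟨v, m, h1, h2, h3⟩ | ⟨l, hl, ⟨o', m, h3, h4, h5⟩, rfl | h2⟩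
  · exact Reach.step .fwd h1 ((P.hD _ _).2 h3) (by simp [OKm, mL, Mk.isHead, h2])
  · exact absurd ⟨o, rfl⟩ hl
  · exact Reach.step .bi h3 ((P.hB _ _).2 ⟨l, hl, h5, h2⟩) h4

lemma okhh {p q : Prop} (h : q) : OKm p q .head .head := by
  simp [OKm, Mk.isHead, h]

lemma Proj.coll (P : Proj H H' ι C C') {a : W'} {x : W} (h : PH H H' ι C' a x)
    (hx : x ∈ (Set.range ι)ᶜ) (hA : x ∈ H.anc C) : PT H H' ι C' a x := by
  obtain ⟨c, hc, hxc⟩ := hA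
  obtain ⟨c', rfl⟩ := P.hCr hc
  obtain ⟨o, ho, hoc⟩ := (P.anc_aux hxc c' rfl).1 hx
  exact ⟨o, .head, P.arrive (h.ext hx ho), okhh ⟨c', (P.hC _).2 hc, hoc⟩, ho⟩

def Inv (H : DMG W) (H' : DMG W') (ι : W' → W) (C : Set W) (C' : Set W') (a : W') (x : W)
    (m : Mk) : Prop :=
  (∀ x', x = ι x' → ∃ m', Reach H' C' a x' m' ∧ ∀ m2, OKm (x ∈ C) (x ∈ H.anc C) m m2 →
      OKm (x' ∈ C') (x' ∈ H'.anc C') m' m2) ∧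
  (x ∈ (Set.range ι)ᶜ → (m.isHead → PH H H' ι C' a x) ∧ (¬ m.isHead → PT H H' ι C' a x))

lemma Proj.inv_head (P : Proj H H' ι C C') {a : W'} {x : W} (h : PH H H' ι C' a x) :
    Inv H H' ι C C' a x .head := by
  refine ⟨?_, fun _ => ⟨fun _ => h, fun h => absurd trivial h⟩⟩
  rintro x' rfl
  exact ⟨.head, P.arrive h, fun m2 h => by rw [P.hC, P.ancC_iff]; exact h⟩

lemma Proj.inv_tail (P : Proj H H' ι C C') {a : W'} {x y : W} (hx : x ∈ (Set.range ι)ᶜ)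
    (h : PT H H' ι C' a x) (hyx : (y, x) ∈ H.Ed) :
    Inv H H' ι C C' a y (.tl (x ∈ H.scc y)) := by
  refine ⟨?_, fun hy => ⟨fun h => h.elim, fun _ => ?_⟩⟩
  · rintro y' rfl
    by_cases hc : ι y' ∈ C ∧ x ∈ H.scc (ι y')
    · obtain ⟨hc, hs⟩ := hc
      obtain ⟨o, ho, hoc⟩ := (P.anc_aux hs.1 y' rfl).1 hx
      have hr : Reach H' C' a o .head := P.arrive ((h.ph hx).ext hx ho)
      have he : (y', o) ∈ H'.Ed := (P.hD _ _).2 (.cons hyx hx ho)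
      refine ⟨_, Reach.step .bwd hr he (okhh ⟨y', (P.hC _).2 hc, hoc⟩), ?_⟩
      have : o ∈ H'.scc y' := ⟨hoc, Relation.ReflTransGen.single he⟩
      intro m2 h2
      rw [P.hC, P.ancC_iff]
      simp only [OKm, mR, Mk.isHead, Mk.good] at h2 ⊢
      tauto
    · obtain ⟨o, m, h1, h2, h3⟩ := h
      refine ⟨_, Reach.step .bwd h1 ((P.hD _ _).2 (.cons hyx hx h3)) h2, ?_⟩
      intro m2 h2
      rw [P.hC, P.ancC_iff]
      simp only [OKm, mR, Mk.isHead, Mk.good] at h2 ⊢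
      tauto
  · obtain ⟨o, m, h1, h2, h3⟩ := h
    exact ⟨o, m, h1, h2, .cons hyx hx h3⟩

lemma Proj.reach_down (P : Proj H H' ι C C') {a : W'} {x : W} {m : Mk}
    (h : Reach H C (ι a) x m) : Inv H H' ι C C' a x m := by
  induction h with
  | init =>
    refine ⟨?_, fun h => absurd ⟨a, rfl⟩ h⟩
    intro x' hx
    obtain rfl := P.inj hx
    exact ⟨_, .init, fun m2 h => by rw [P.hC, P.ancC_iff]; exact h⟩
  | @step x y m t _ hl hok ih =>
    by_cases hx : x ∈ Set.range ι
    · obtain ⟨x', rfl⟩ := hx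
      obtain ⟨m', hr, hm⟩ := ih.1 x' rfl
      have hok' := hm _ hok
      cases t with
      | fwd =>
        change Inv H H' ι C C' a y .head
        by_cases hc : x' ∈ C'
        · by_cases hy : y ∈ Set.range ι
          · obtain ⟨y', rfl⟩ := hy
            refine ⟨?_, fun h => absurd ⟨y', rfl⟩ h⟩
            intro y'' hyy
            obtain rfl := P.inj hyy
            refine ⟨.head, Reach.step .fwd hr ((P.hD _ _).2 (.single hl)) ?_,
              fun m2 h => by rw [P.hC, P.ancC_iff]; exact h⟩
            simp only [mL] at hok' ⊢
            rw [P.scc_iff]; exact hok'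
          · have h2 := hok'.2 (by simp [mL, Mk.isHead]) hc
            have hs : y ∈ H.scc (ι x') := h2.2
            obtain ⟨o, ho, hoc⟩ := (P.anc_aux hs.1 x' rfl).1 hy
            have he : (x', o) ∈ H'.Ed := (P.hD _ _).2 (.cons hl hy ho)
            have hos : o ∈ H'.scc x' := ⟨hoc, Relation.ReflTransGen.single he⟩
            have hro : Reach H' C' a o .head := by
              refine Reach.step .fwd hr he ⟨?_, ?_⟩
              · simp [mL, Mk.isHead]
              · intro _ _; exact ⟨h2.1, hos⟩
            have : PT H H' ι C' a y := ⟨o, .head, hro, okhh ⟨x', hc, hoc⟩, ho⟩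
            exact P.inv_head (this.ph hy)
        · exact P.inv_head (.inl ⟨x', m', hr, hc, .single hl⟩)
      | bwd =>
        refine ⟨?_, fun hy => ⟨fun h => h.elim, fun _ => ⟨x', m', hr, hok', .single hl⟩⟩⟩
        rintro y' rfl
        refine ⟨_, Reach.step .bwd hr ((P.hD _ _).2 (.single hl)) hok', ?_⟩
        intro m2 h2
        rw [P.hC, P.ancC_iff]
        simp only [mR] at h2 ⊢
        rw [P.scc_iff]; exact h2
      | bi => simp [DMG.linkOK, P.hbi] at hl
    · obtain ⟨h1, h2⟩ := ih.2 hx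
      cases t with
      | fwd =>
        refine P.inv_head (PH.ext (x := x) ?_ hx (.single hl))
        by_cases hm : m.isHead
        · exact h1 hm
        · exact (h2 hm).ph hx
      | bwd =>
        refine P.inv_tail hx ?_ hl
        by_cases hm : m.isHead
        · exact P.coll (h1 hm) hx (hok.1 ⟨hm, trivial⟩)
        · exact h2 hm
      | bi => simp [DMG.linkOK, P.hbi] at hl

end

/-! Relating `DP` with walks and lifts. -/

lemma dp_of_walk {G : DMG V} {L : Set V} {a b : V} (p : G.Walk a b) : p.IsDirected →
    0 < p.length → (∀ x ∈ p.interior, x ∈ L) → DP G L a b := by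
  induction p with
  | nil v => intro _ h; simp [DMG.Walk.length] at h
  | cons t h q ih =>
    rintro ⟨rfl, hq⟩ _ hi
    cases q with
    | nil => exact .single h
    | cons t' h' q' =>
      have hi' : ∀ x ∈ (DMG.Walk.cons t' h' q').support.dropLast, x ∈ L := hi
      have hs : q'.support ≠ [] := by cases q' <;> simp [DMG.Walk.support]
      simp only [DMG.Walk.support, List.dropLast_cons_of_ne_nil hs] at hi'
      refine .cons h (hi' _ (by simp)) (ih hq (by simp [DMG.Walk.length]) ?_)
      intro x hx
      exact hi' x (List.mem_cons_of_mem _ hx)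

lemma support_ne {G : DMG V} {a b : V} (p : G.Walk a b) : p.support ≠ [] := by
  cases p <;> simp [DMG.Walk.support]

lemma walk_of_dp {G : DMG V} {L : Set V} {a b : V} (h : DP G L a b) :
    ∃ p : G.Walk a b, p.IsDirected ∧ 0 < p.length ∧ ∀ x ∈ p.interior, x ∈ L := by
  induction h with
  | single h =>
    exact ⟨.cons .fwd h (.nil _), ⟨rfl, trivial⟩, by simp [DMG.Walk.length],
      by simp [DMG.Walk.interior, DMG.Walk.support]⟩
  | @cons x z y h hz _ ih =>
    obtain ⟨p, h1, h2, h3⟩ := ih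
    refine ⟨.cons .fwd h p, ⟨rfl, h1⟩, by simp [DMG.Walk.length], ?_⟩
    cases p with
    | nil => simp [DMG.Walk.length] at h2
    | cons t' h' q =>
      intro x hx
      simp only [DMG.Walk.interior, DMG.Walk.support, List.tail_cons,
        List.dropLast_cons_of_ne_nil (support_ne q), List.mem_cons] at hx h3
      rcases hx with rfl | hx
      · exact hz
      · exact h3 x hx

/-- Walks starting after a forward link with no colliders are directed. -/
lemma directed_of_nocoll {G : DMG V} (hG : G.Ebi = ∅) {a b : V} (p : G.Walk a b) :
    p.noCollidersAux .fwd → p.IsDirected := by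
  induction p with
  | nil v => intro _; trivial
  | cons t h q ih =>
    rintro ⟨h1, h2⟩
    cases t with
    | fwd => exact ⟨rfl, ih h2⟩
    | bwd => exact absurd ⟨trivial, trivial⟩ h1
    | bi => simp [DMG.linkOK, hG] at h

lemma fork_of_walk {G : DMG V} (hG : G.Ebi = ∅) {L : Set V} {a b : V} (p : G.Walk a b) :
    ∀ u, (a, u) ∈ G.Ed → p.noCollidersAux .bwd → p.headAtEndAux .bwd →
    (∀ x ∈ p.support.dropLast, x ∈ L) → ∃ l ∈ L, DP G L l u ∧ DP G L l b := by
  induction p with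
  | nil v => intro u _ _ h; simp [DMG.Walk.headAtEndAux, LinkType.headR] at h
  | @cons a c b t h q ih =>
    rintro u hu ⟨h1, h2⟩ h3 hi
    simp only [DMG.Walk.support, List.dropLast_cons_of_ne_nil (support_ne q)] at hi
    have haL : a ∈ L := hi a (by simp)
    cases t with
    | fwd =>
      refine ⟨a, haL, .single hu, dp_of_walk (.cons .fwd h q) ⟨rfl, directed_of_nocoll hG q h2⟩
        (by simp [DMG.Walk.length]) ?_⟩
      intro x hx
      exact hi x (List.mem_cons_of_mem _ hx)
    | bwd =>
      obtain ⟨l, hl, hd, hd2⟩ := ih a h h2 h3 (fun x hx => hi x (List.mem_cons_of_mem _ hx))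
      exact ⟨l, hl, hd.trans haL (.single hu), hd2⟩
    | bi => simp [DMG.linkOK, hG] at h

lemma nocoll_of_directed {G : DMG V} {a b : V} (p : G.Walk a b) : ∀ t,
    p.IsDirected → p.noCollidersAux t := by
  induction p with
  | nil v => intro _ _; trivial
  | cons t h q ih =>
    rintro t' ⟨rfl, hq⟩
    exact ⟨fun h => h.2, ih _ hq⟩

lemma head_of_directed {G : DMG V} {a b : V} (p : G.Walk a b) :
    p.IsDirected → p.headAtEndAux .fwd := by
  induction p with
  | nil v => intro _; trivial
  | cons t h q ih =>
    rintro ⟨rfl, hq⟩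
    exact ih hq

lemma head_of_directed' {G : DMG V} {a b : V} (p : G.Walk a b) (t : LinkType) 
    (h0 : 0 < p.length) (h : p.IsDirected) : p.headAtEndAux t := by
  cases p with
  | nil v => simp [DMG.Walk.length] at h0
  | cons t h' q =>
    obtain ⟨rfl, hq⟩ := h
    exact head_of_directed q hq

lemma walk_of_fork {G : DMG V} {L : Set V} {l u : V} (h : DP G L l u) : ∀ {b : V}
    (q : G.Walk l b), l ∈ L → (∀ x ∈ q.support.dropLast, x ∈ L) → 
    q.noCollidersAux .bwd → q.headAtEndAux .bwd →
    ∃ p : G.Walk u b, p.headAtStart ∧ p.headAtEnd ∧ p.NoColliders ∧ 0 < p.length ∧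
          ∀ x ∈ p.interior, x ∈ L := by
  induction h with
  | single h =>
    intro b q hl h1 h2 h3
    exact ⟨.cons .bwd h q, trivial, h3, h2, by simp [DMG.Walk.length], h1⟩
  | @cons x z y h hz _ ih =>
    intro b q hl h1 h2 h3
    refine ih (.cons .bwd h q) hz ?_ ⟨fun h => h.1, h2⟩ h3
    intro w hw
    simp only [DMG.Walk.support, List.dropLast_cons_of_ne_nil (support_ne q),
      List.mem_cons] at hw
    rcases hw with rfl | hw
    · exact hz
    · exact h1 w hw

lemma latent_ed (G : DMG V) (O : Set V) (u v : O) :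
    (u, v) ∈ (G.latentProj O).Ed ↔ DP G Oᶜ u.1 v.1 := by
  constructor
  · rintro ⟨p, h1, h2, h3⟩
    exact dp_of_walk p h1 h2 h3
  · intro h
    exact walk_of_dp h

lemma latent_bi (G : DMG V) (hG : G.Ebi = ∅) (O : Set V) (u v : O) :
    s(u, v) ∈ (G.latentProj O).Ebi ↔ ∃ l ∈ Oᶜ, DP G Oᶜ l u.1 ∧ DP G Oᶜ l v.1 := by
  constructor
  · rintro ⟨u', v', he, p, h1, h2, h3, h4, h5⟩
    have : ∃ l ∈ Oᶜ, DP G Oᶜ l u'.1 ∧ DP G Oᶜ l v'.1 := by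
      revert h1 h2 h3 h4 h5
      generalize u'.1 = a, v'.1 = b at p
      intro h1 h2 h3 h4 h5
      cases p with
      | nil => exact h1.elim
      | cons t h q =>
        cases t with
        | fwd => exact h1.elim
        | bwd => exact fork_of_walk hG q _ h h3 h2 h5
        | bi => simp [DMG.linkOK, hG] at h
    obtain ⟨l, hl, ha, hb⟩ := this
    rcases Sym2.eq_iff.1 he with ⟨rfl, rfl⟩ | ⟨rfl, rfl⟩
    · exact ⟨l, hl, ha, hb⟩
    · exact ⟨l, hl, hb, ha⟩
  · rintro ⟨l, hl, h1, h2⟩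
    refine ⟨u, v, rfl, ?_⟩
    obtain ⟨q, q1, q2, q3⟩ := walk_of_dp h2
    refine walk_of_fork h1 q hl ?_ (nocoll_of_directed q _ q1) (head_of_directed' q _ q2 q1)
    cases q with
    | nil => simp [DMG.Walk.length] at q2
    | cons t h q =>
      intro x hx
      simp only [DMG.Walk.support, List.dropLast_cons_of_ne_nil (support_ne q),
        List.mem_cons] at hx
      rcases hx with rfl | hx
      · exact hl
      · exact q3 x hx

/-- projection from the two copies -/
def pr : V ⊕ V → V := Sum.elim id id

/-- compatibility of copies: not from future to past -/
def cmp : V ⊕ V → V ⊕ V → Prop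
  | .inr _, .inl _ => False
  | _, _ => True

lemma lift_ed (G : DMG V) (x y : V ⊕ V) : (x, y) ∈ G.lift.Ed ↔ (pr x, pr y) ∈ G.Ed ∧ cmp x y := by
  rcases x with x | x <;> rcases y with y | y <;> simp [DMG.lift, pr, cmp]

lemma lift_bi (G : DMG V) (x y : V ⊕ V) : s(x, y) ∈ G.lift.Ebi ↔ s(pr x, pr y) ∈ G.Ebi := by
  constructor
  · rintro ⟨u, v, h, he⟩
    rcases he with he | he | he | he <;> rcases Sym2.eq_iff.1 he with ⟨rfl, rfl⟩ | ⟨rfl, rfl⟩ <;>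
      first | exact h | (rw [Sym2.eq_swap]; exact h)
  · intro h
    refine ⟨pr x, pr y, h, ?_⟩
    rcases x with x | x <;> rcases y with y | y <;> simp [pr]

lemma lift_dp (G : DMG V) (L : Set V) (x y : V ⊕ V) :
    DP G.lift (pr ⁻¹' L) x y ↔ DP G L (pr x) (pr y) ∧ cmp x y := by
  constructor
  · intro h
    induction h with
    | single h => rw [lift_ed] at h; exact ⟨.single h.1, h.2⟩
    | @cons x z y h hz _ ih =>
      rw [lift_ed] at h
      refine ⟨.cons h.1 hz ih.1, ?_⟩
      have h2 := h.2
      have h3 := ih.2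
      rcases x with x | x <;> rcases y with y | y <;> rcases z with z | z <;> simp_all [cmp]
  · rintro ⟨h, hc⟩
    generalize hu : pr x = u at h
    generalize hv : pr y = v at h
    induction h generalizing x with
    | single h => subst hu hv; exact .single ((lift_ed _ _ _).2 ⟨h, hc⟩)
    | @cons u z v h hz _ ih =>
      subst hu hv
      rcases y with y | y
      · refine .cons (z := (Sum.inl z : V ⊕ V)) ((lift_ed _ _ (Sum.inl z)).2 ⟨h, ?_⟩) hz (ih _ (by trivial) rfl rfl)
        rcases x with x | x <;> simp_all [cmp]
      · refine .cons (z := (Sum.inr z : V ⊕ V)) ((lift_ed _ _ (Sum.inr z)).2 ⟨h, ?_⟩) hz (ih _ (by trivial) rfl rfl)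
        rcases x with x | x <;> simp_all [cmp]

def emb (O : Set V) : O ⊕ O → V ⊕ V := Sum.map Subtype.val Subtype.val

lemma range_emb (O : Set V) : (Set.range (emb O))ᶜ = pr ⁻¹' Oᶜ := by
  ext x
  rcases x with x | x <;> simp [emb, pr]

lemma pr_emb (O : Set V) (x : O ⊕ O) : pr (emb O x) = (pr x).1 := by
  rcases x with x | x <;> rfl

lemma cmp_emb (O : Set V) (x y : O ⊕ O) : cmp (emb O x) (emb O y) ↔ cmp x y := by
  rcases x with x | x <;> rcases y with y | y <;> rfl

lemma the_proj (G : DMG V) (hG : G.Ebi = ∅) (O B C : Set V) (hC : C ⊆ O) :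
    Proj G.lift (G.latentProj O).lift (emb O)
    ((Sum.inl '' C) ∪ ((Sum.inr '' C) \ (Sum.inr '' B)))
    ((Sum.inl '' (Subtype.val ⁻¹' C)) ∪
      ((Sum.inr '' (Subtype.val ⁻¹' C)) \ (Sum.inr '' (Subtype.val ⁻¹' B)))) where
  hbi := by simp [DMG.lift, hG]
  inj := Sum.map_injective.2 ⟨Subtype.val_injective, Subtype.val_injective⟩
  hD u v := by
    rw [range_emb, lift_dp, lift_ed, latent_ed, pr_emb, pr_emb, cmp_emb]
  hB u v := by
    rw [range_emb, lift_bi, latent_bi G hG]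
    constructor
    · rintro ⟨l, hl, h1, h2⟩
      refine ⟨.inl l, hl, ?_, ?_⟩
      · rw [lift_dp, pr_emb]; refine ⟨h1, ?_⟩; cases u <;> trivial
      · rw [lift_dp, pr_emb]; refine ⟨h2, ?_⟩; cases v <;> trivial
    · rintro ⟨l, hl, h1, h2⟩
      rw [lift_dp, pr_emb] at h1 h2
      exact ⟨pr l, hl, h1.1, h2.1⟩
  hC v := by
    rcases v with v | v <;> simp [emb]
  hCr := by
    rintro (x | x) hx
    · simp at hx
      exact ⟨.inl ⟨x, hC hx⟩, rfl⟩
    · simp at hx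
      exact ⟨.inr ⟨x, hC hx.1⟩, rfl⟩

/-- Marginalization preserves the E-separation model: for sets of observed nodes
(`O` observed, `Oᶜ` latent), membership in `I_E` of the full directed graph coincides
with membership in `I_E` of its latent projection. -/
theorem latent_projection_preserves {V : Type} [Fintype V] (G : DMG V)
    (hG : G.Ebi = ∅) (O : Set V) (A B C : Set V)
    (hA : A ⊆ O) (hB : B ⊆ O) (hC : C ⊆ O) (hAC : A ∩ C = ∅) :
    (A, B, C) ∈ G.IE ↔
      ((Subtype.val ⁻¹' A : Set O), (Subtype.val ⁻¹' B : Set O),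
        (Subtype.val ⁻¹' C : Set O)) ∈ (G.latentProj O).IE := by

  have P := the_proj G hG O B C hC
  have hAC' : ∀ a ∈ A, a ∉ C := fun a ha hc => by
    have : a ∈ A ∩ C := ⟨ha, hc⟩
    rw [hAC] at this; exact this
  change G.lift.sigmaSep _ _ _ ↔ (G.latentProj O).lift.sigmaSep _ _ _
  rw [sep_iff, sep_iff]
  · constructor
    · rintro h _ ⟨a, ha, rfl⟩ _ ⟨b, hb, rfl⟩ m hr
      obtain ⟨m', hr', -⟩ := P.reach_up hr
      exact h _ ⟨a.1, ha, rfl⟩ _ ⟨b.1, hb, rfl⟩ m' hr'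
    · rintro h _ ⟨a, ha, rfl⟩ _ ⟨b, hb, rfl⟩ m hr
      obtain ⟨m', hr', -⟩ := (P.reach_down (a := .inl ⟨a, hA ha⟩) hr).1 (.inr ⟨b, hB hb⟩) rfl
      exact h _ ⟨⟨a, hA ha⟩, ha, rfl⟩ _ ⟨⟨b, hB hb⟩, hb, rfl⟩ m' hr'
  · rintro _ ⟨a, ha, rfl⟩ hc
    have : a.1 ∈ C := by simpa using hc
    exact hAC' _ ha this
  · rintro _ ⟨a, ha, rfl⟩ hc
    have : a ∈ C := by simpa using hc
    exact hAC' _ ha this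

end ESepPaper
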